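/- The rms noise of a measuring process is determined by its POVM moments: let (ℂᵐ, ξ, U, M) be a finite-dimensional measuring process for ℂⁿ, and for k = 1, 2 define the moment operators Π⁽ᵏ⁾ = Tr_K[U†(I⊗Mᵏ)U·(I⊗|ξ⟩⟨ξ|)]. Then for every Hermitian n×n matrix A and every density matrix ρ on ℂⁿ, ε(A;ρ)² = Tr[Π⁽²⁾ρ] − Tr[Π⁽¹⁾ρA] − Tr[Π⁽¹⁾Aρ] + Tr[A²ρ]. -/

import Mathlib

open ComplexOrder Kronecker Matrix

/-- The rank-one projection `|ξ⟩⟨ξ|` onto a vector `ξ`. -/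
noncomputable def rankOneProj {m : ℕ} (ξ : Fin m → ℂ) : Matrix (Fin m) (Fin m) ℂ :=
  Matrix.vecMulVec ξ (star ξ)

/-- The partial trace over the second tensor factor. -/
noncomputable def trK {n m : ℕ} (X : Matrix (Fin n × Fin m) (Fin n × Fin m) ℂ) :
    Matrix (Fin n) (Fin n) ℂ :=
  Matrix.of fun i j => ∑ k, X (i, k) (j, k)

/-- The noise operator `N(A) = U†(I⊗M)U − A⊗I` of a measuring process. -/
noncomputable def noiseOp {n m : ℕ} (U : Matrix (Fin n × Fin m) (Fin n × Fin m) ℂ)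
    (M : Matrix (Fin m) (Fin m) ℂ) (A : Matrix (Fin n) (Fin n) ℂ) :
    Matrix (Fin n × Fin m) (Fin n × Fin m) ℂ :=
  Uᴴ * ((1 : Matrix (Fin n) (Fin n) ℂ) ⊗ₖ M) * U - A ⊗ₖ (1 : Matrix (Fin m) (Fin m) ℂ)

/-- The disturbance operator `D(B) = U†(B⊗I)U − B⊗I` of a measuring process. -/
noncomputable def distOp {n m : ℕ} (U : Matrix (Fin n × Fin m) (Fin n × Fin m) ℂ)
    (B : Matrix (Fin n) (Fin n) ℂ) :
    Matrix (Fin n × Fin m) (Fin n × Fin m) ℂ :=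
  Uᴴ * (B ⊗ₖ (1 : Matrix (Fin m) (Fin m) ℂ)) * U - B ⊗ₖ (1 : Matrix (Fin m) (Fin m) ℂ)

/-- The rms noise `ε(A;ρ) = (Tr[N(A)²(ρ⊗|ξ⟩⟨ξ|)])^{1/2}`. -/
noncomputable def rmsNoise {n m : ℕ} (U : Matrix (Fin n × Fin m) (Fin n × Fin m) ℂ)
    (M : Matrix (Fin m) (Fin m) ℂ) (ξ : Fin m → ℂ) (A ρ : Matrix (Fin n) (Fin n) ℂ) : ℝ :=
  Real.sqrt ((noiseOp U M A * noiseOp U M A * (ρ ⊗ₖ rankOneProj ξ)).trace.re)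

/-- The rms disturbance `η(B;ρ) = (Tr[D(B)²(ρ⊗|ξ⟩⟨ξ|)])^{1/2}`. -/
noncomputable def rmsDist {n m : ℕ} (U : Matrix (Fin n × Fin m) (Fin n × Fin m) ℂ)
    (ξ : Fin m → ℂ) (B ρ : Matrix (Fin n) (Fin n) ℂ) : ℝ :=
  Real.sqrt ((distOp U B * distOp U B * (ρ ⊗ₖ rankOneProj ξ)).trace.re)

/-- The standard deviation of a Hermitian matrix `C` in the state `τ`:
`σ(C;τ)² = Tr[C²τ] − (Tr[Cτ])²`. -/
noncomputable def stddev {k : ℕ} (C τ : Matrix (Fin k) (Fin k) ℂ) : ℝ :=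
  Real.sqrt ((C * C * τ).trace.re - ((C * τ).trace.re) ^ 2)

/-!
Pairing a moment operator with `B` gives `Tr[Π B] = Tr[U†(I⊗X)U (B⊗|ξ⟩⟨ξ|)]`, because the partial
trace is dual to `B ↦ B⊗I`. Expanding the square in `Tr[N(A)²(ρ⊗|ξ⟩⟨ξ|)]` therefore produces the
four terms of the formula; unitarity of `U` turns the square of `U†(I⊗M)U` into `U†(I⊗M²)U`.
Positivity of `ρ` and self-adjointness of `N(A)` make the trace nonnegative, so that squaring the
rms noise recovers it.
-/

section

variable {ι R : Type*} [Fintype ι]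

theorem conj_mul_conj_of_mul_eq_one {G : Type*} [Monoid G] {u v : G} (h : u * v = 1) (a b : G) :
    v * a * u * (v * b * u) = v * (a * b) * u := by
  calc v * a * u * (v * b * u) = v * a * (u * v) * b * u := by simp only [mul_assoc]
    _ = v * (a * b) * u := by rw [h, mul_one, mul_assoc v a b]

theorem trace_sub_mul_sub_mul [CommRing R] (X B τ : Matrix ι ι R) :
    ((X - B) * (X - B) * τ).trace =
      (X * X * τ).trace - (X * (τ * B)).trace - (X * (B * τ)).trace + (B * B * τ).trace := by
  have cyclic : (B * (X * τ)).trace = (X * (τ * B)).trace := by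
    rw [trace_mul_comm, Matrix.mul_assoc]
  simp only [Matrix.sub_mul, Matrix.mul_sub, trace_sub, Matrix.mul_assoc, cyclic]
  ring

theorem trace_mul_self_mul_nonneg [CommRing R] [PartialOrder R] [StarRing R] [AddLeftMono R]
    {N τ : Matrix ι ι R} (hN : N.IsHermitian) (hτ : τ.PosSemidef) :
    0 ≤ (N * N * τ).trace := by
  have hconj : 0 ≤ (N * τ * Nᴴ).trace := (hτ.mul_mul_conjTranspose_same N).trace_nonneg
  rwa [hN.eq, trace_mul_cycle] at hconj

end

section MeasuringProcess

variable {n m : ℕ}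

theorem trace_trK (X : Matrix (Fin n × Fin m) (Fin n × Fin m) ℂ) : (trK X).trace = X.trace :=
  (Fintype.sum_prod_type X.diag).symm

theorem trK_mul_kronecker_one (X : Matrix (Fin n × Fin m) (Fin n × Fin m) ℂ)
    (B : Matrix (Fin n) (Fin n) ℂ) :
    trK (X * (B ⊗ₖ (1 : Matrix (Fin m) (Fin m) ℂ))) = trK X * B := by
  ext i j
  simp only [trK, of_apply, mul_apply, Fintype.sum_prod_type, kronecker_apply, one_apply, mul_ite,
    mul_one, mul_zero, Finset.sum_ite_eq', Finset.mem_univ, if_true, Finset.sum_mul]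
  exact Finset.sum_comm

/-- The operator `Tr_K[U†(I⊗X)U·(I⊗σ)]` on the system obtained by averaging the probe observable
`X`, evolved by `U`, over the initial probe state `σ`. The moment operator `Π⁽ᵏ⁾` is the case
`X = Mᵏ`, `σ = |ξ⟩⟨ξ|`. -/
noncomputable def momentOp (U : Matrix (Fin n × Fin m) (Fin n × Fin m) ℂ)
    (σ X : Matrix (Fin m) (Fin m) ℂ) : Matrix (Fin n) (Fin n) ℂ :=
  trK (Uᴴ * ((1 : Matrix (Fin n) (Fin n) ℂ) ⊗ₖ X) * U * ((1 : Matrix (Fin n) (Fin n) ℂ) ⊗ₖ σ))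

theorem trace_momentOp_mul (U : Matrix (Fin n × Fin m) (Fin n × Fin m) ℂ)
    (σ X : Matrix (Fin m) (Fin m) ℂ) (B : Matrix (Fin n) (Fin n) ℂ) :
    (momentOp U σ X * B).trace =
      (Uᴴ * ((1 : Matrix (Fin n) (Fin n) ℂ) ⊗ₖ X) * U * (B ⊗ₖ σ)).trace := by
  rw [momentOp, ← trK_mul_kronecker_one, trace_trK, Matrix.mul_assoc _ (1 ⊗ₖ σ),
    ← mul_kronecker_mul, one_mul, mul_one]

theorem isHermitian_noiseOp (U : Matrix (Fin n × Fin m) (Fin n × Fin m) ℂ)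
    {M : Matrix (Fin m) (Fin m) ℂ} (hM : M.IsHermitian)
    {A : Matrix (Fin n) (Fin n) ℂ} (hA : A.IsHermitian) : (noiseOp U M A).IsHermitian := by
  have hmeter : ((1 : Matrix (Fin n) (Fin n) ℂ) ⊗ₖ M).IsHermitian := by
    rw [IsHermitian, conjTranspose_kronecker, conjTranspose_one, hM.eq]
  have hsystem : (A ⊗ₖ (1 : Matrix (Fin m) (Fin m) ℂ)).IsHermitian := by
    rw [IsHermitian, conjTranspose_kronecker, conjTranspose_one, hA.eq]
  exact (isHermitian_conjTranspose_mul_mul U hmeter).sub hsystem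

theorem trace_noiseOp_mul_self_mul_kronecker
    {U : Matrix (Fin n × Fin m) (Fin n × Fin m) ℂ} (hU : U * Uᴴ = 1)
    (M : Matrix (Fin m) (Fin m) ℂ) {σ : Matrix (Fin m) (Fin m) ℂ} (hσ : σ.trace = 1)
    (A ρ : Matrix (Fin n) (Fin n) ℂ) :
    (noiseOp U M A * noiseOp U M A * (ρ ⊗ₖ σ)).trace =
      (momentOp U σ (M * M) * ρ).trace - (momentOp U σ M * ρ * A).trace
        - (momentOp U σ M * A * ρ).trace + (A * A * ρ).trace := by
  have hsq : Uᴴ * ((1 : Matrix (Fin n) (Fin n) ℂ) ⊗ₖ M) * U * (Uᴴ * (1 ⊗ₖ M) * U) =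
      Uᴴ * (1 ⊗ₖ (M * M)) * U := by
    rw [conj_mul_conj_of_mul_eq_one hU, ← mul_kronecker_mul, one_mul]
  have hsystem : (A * A * ρ).trace = ((A * A * ρ) ⊗ₖ σ).trace := by
    rw [trace_kronecker, hσ, mul_one]
  rw [noiseOp, trace_sub_mul_sub_mul, hsq, hsystem, Matrix.mul_assoc _ ρ A, Matrix.mul_assoc _ A ρ]
  simp only [trace_momentOp_mul, ← mul_kronecker_mul, one_mul, mul_one]

theorem rmsNoise_sq (U : Matrix (Fin n × Fin m) (Fin n × Fin m) ℂ)
    {M : Matrix (Fin m) (Fin m) ℂ} (hM : M.IsHermitian) (ξ : Fin m → ℂ)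
    {A : Matrix (Fin n) (Fin n) ℂ} (hA : A.IsHermitian)
    {ρ : Matrix (Fin n) (Fin n) ℂ} (hρ : ρ.PosSemidef) :
    rmsNoise U M ξ A ρ ^ 2 =
      (noiseOp U M A * noiseOp U M A * (ρ ⊗ₖ rankOneProj ξ)).trace.re := by
  have hstate : (ρ ⊗ₖ rankOneProj ξ).PosSemidef := hρ.kronecker (posSemidef_vecMulVec_self_star ξ)
  have htrace := trace_mul_self_mul_nonneg (isHermitian_noiseOp U hM hA) hstate
  exact Real.sq_sqrt (Complex.nonneg_iff.mp htrace).1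

theorem trace_rankOneProj (ξ : Fin m → ℂ) : (rankOneProj ξ).trace = star ξ ⬝ᵥ ξ := by
  rw [rankOneProj, trace_vecMulVec, dotProduct_comm]

theorem rmsNoise_eq_moments_general
    {ξ : Fin m → ℂ} (hξ : star ξ ⬝ᵥ ξ = 1)
    {U : Matrix (Fin n × Fin m) (Fin n × Fin m) ℂ} (hU : U * Uᴴ = 1)
    {M : Matrix (Fin m) (Fin m) ℂ} (hM : M.IsHermitian)
    {A : Matrix (Fin n) (Fin n) ℂ} (hA : A.IsHermitian)
    {ρ : Matrix (Fin n) (Fin n) ℂ} (hρ : ρ.PosSemidef) :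
    rmsNoise U M ξ A ρ ^ 2 =
      (momentOp U (rankOneProj ξ) (M * M) * ρ).trace.re
        - (momentOp U (rankOneProj ξ) M * ρ * A).trace.re
        - (momentOp U (rankOneProj ξ) M * A * ρ).trace.re
        + (A * A * ρ).trace.re := by
  rw [rmsNoise_sq U hM ξ hA hρ,
    trace_noiseOp_mul_self_mul_kronecker hU M ((trace_rankOneProj ξ).trans hξ) A ρ]
  simp only [Complex.add_re, Complex.sub_re]

end MeasuringProcess

/-- The rms noise of a measuring process is determined by its POVM moments. -/
theorem rmsNoise_eq_moments {n m : ℕ} (hn : 0 < n) (hm : 0 < m)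
    (ξ : Fin m → ℂ) (hξ : star ξ ⬝ᵥ ξ = 1)
    (U : Matrix (Fin n × Fin m) (Fin n × Fin m) ℂ)
    (hU : U * Uᴴ = 1) (hU' : Uᴴ * U = 1)
    (M : Matrix (Fin m) (Fin m) ℂ) (hM : M.IsHermitian)
    (A : Matrix (Fin n) (Fin n) ℂ) (hA : A.IsHermitian)
    (ρ : Matrix (Fin n) (Fin n) ℂ) (hρ : ρ.PosSemidef) (hρtr : ρ.trace = 1) :
    rmsNoise U M ξ A ρ ^ 2 =
      (trK (Uᴴ * ((1 : Matrix (Fin n) (Fin n) ℂ) ⊗ₖ (M * M)) * U *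
            ((1 : Matrix (Fin n) (Fin n) ℂ) ⊗ₖ rankOneProj ξ)) * ρ).trace.re
        - (trK (Uᴴ * ((1 : Matrix (Fin n) (Fin n) ℂ) ⊗ₖ M) * U *
            ((1 : Matrix (Fin n) (Fin n) ℂ) ⊗ₖ rankOneProj ξ)) * ρ * A).trace.re
        - (trK (Uᴴ * ((1 : Matrix (Fin n) (Fin n) ℂ) ⊗ₖ M) * U *
            ((1 : Matrix (Fin n) (Fin n) ℂ) ⊗ₖ rankOneProj ξ)) * A * ρ).trace.re
        + (A * A * ρ).trace.re :=
  rmsNoise_eq_moments_general hξ hU hM hA hρ
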